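/- arXiv:2006.15944 — 2 statements merged into one kernel-verified Lean document; each statement's English description precedes it below -/
import Mathlib

section
/- Let K₀ ≥ 0, set κ̂ = ρ·min{1,α}, and for t>0, x≠0 define g(t,x) = (|x|/(|x|+√t))^{κ̂} |x|^{−2} + (K₀ h(t,x))^α + K₀ g̃(t,x), where g̃(t,x) = 0 if α ≤ 1 and g̃(t,x) = |x|^{−2(α−1)/α} h(t,x) if α > 1. Set ϑ = (N−2)/2 − η; then ϑ > 0, and there exists a constant C₁ (depending on N, α, K₀) such that for all t, s, σ ∈ (0,1) and all x ≠ 0: (1) g(t,x) ≤ C₁(1 + |x|^{−2}); (2) g(t,x) h(s,x) ≤ C₁(1 + |x|^{−(N+2)/2}); (3) g(t,x) h(s,x) h(σ,x) ≤ C₁(1 + |x|^{−N+ϑ}). -/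
open MeasureTheory Filter

noncomputable section

/-- `N`-dimensional Euclidean space. -/
abbrev Euc (N : ℕ) := EuclideanSpace ℝ (Fin N)

/-!
Since `t, s, σ ≤ 1`, everything is dominated by powers of `w = 1 + 1 / |x|`: each factor `h` by
`w ^ η`, and `g` by a multiple of `w ^ 2` because `0 ≤ ρ` and `η ≤ 2 / α`. Hence `g`, `g h` and
`g h h` are at most multiples of `w ^ 2`, `w ^ (2 + η)` and `w ^ (2 + 2 η)`, and with
`η = (N - 2) / 2 - ϑ` these exponents are at most `2`, `(N + 2) / 2` and `N - ϑ`. The condition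
`α < α₀` enters through the identity
`(N - 2) ^ 2 / 4 - β (α + 1) = (2 / α - (N - 4) / 2) ^ 2 - (N - 1)`, which makes `ϑ` positive.
-/

/-- The number `β`: `β ^ (1 / α) * |x| ^ (-2 / α)` is the singular stationary solution of
`∂ₜu = Δu + |u| ^ α u` on `ℝ^N`. As in all definitions below, the dimension `N` is a real
parameter. -/
def singularCoeff (N α : ℝ) : ℝ := 2 / α * (N - 2 - 2 / α)

/-- The amount by which the Hardy constant `(N - 2) ^ 2 / 4` exceeds `β (α + 1)`, the coefficient of
the inverse-square potential in the linearization at the singular solution. -/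
def hardyGap (N α : ℝ) : ℝ := (N - 2) ^ 2 / 4 - singularCoeff N α * (α + 1)

/-- The exponent `η`: the smaller root of `η ^ 2 - (N - 2) η + β (α + 1)`. -/
def hardyExponent (N α : ℝ) : ℝ := (N - 2) / 2 - √(hardyGap N α)

/-- The exponent `ρ`, from which the decay rate `κ̂ = ρ * min 1 α` is formed. -/
def decayExponent (N α : ℝ) : ℝ := 2 / α - (N - 2) / 2 - √(hardyGap N α)

/-- The radial profile, in `r = |x|`, of the weight `h(t, x)` with exponent `η`. -/
def heatWeight (η t r : ℝ) : ℝ := (1 + √t / r) ^ η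

/-- The radial profile of `g̃(t, x)`. -/
def superlinearTerm (α η t r : ℝ) : ℝ :=
  if α ≤ 1 then 0 else r ^ (-(2 * (α - 1) / α)) * heatWeight η t r

/-- The radial profile of `g(t, x)`, for arbitrary exponents `ρ` and `η`. -/
def potentialBound (α ρ η K t r : ℝ) : ℝ :=
  (r / (r + √t)) ^ (ρ * min 1 α) * r ^ (-2 : ℝ) + (K * heatWeight η t r) ^ α +
    K * superlinearTerm α η t r

section Exponents

variable {N α : ℝ}

lemma hardyGap_eq (hα : α ≠ 0) : hardyGap N α = (2 / α - (N - 4) / 2) ^ 2 - (N - 1) := by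
  unfold hardyGap singularCoeff
  field_simp
  ring

lemma sqrt_sub_one_lt_two_div_sub (hN : 2 < N) (hα : 0 < α)
    (hα₀ : α < 4 / (N - 4 + 2 * √(N - 1))) : √(N - 1) < 2 / α - (N - 4) / 2 := by
  have hsqrt : 1 < √(N - 1) := Real.lt_sqrt_of_sq_lt (by linarith)
  have hden : 0 < N - 4 + 2 * √(N - 1) := by linarith
  have hlt : N - 4 + 2 * √(N - 1) < 4 / α := (lt_div_comm₀ hα hden).mp hα₀
  linarith [show 4 / α = 2 * (2 / α) by ring]

lemma hardyGap_pos (hN : 2 < N) (hα : 0 < α) (hα₀ : α < 4 / (N - 4 + 2 * √(N - 1))) :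
    0 < hardyGap N α := by
  rw [hardyGap_eq hα.ne', sub_pos]
  exact Real.lt_sq_of_sqrt_lt (sqrt_sub_one_lt_two_div_sub hN hα hα₀)

lemma half_sub_two_lt_two_div (hN : 2 < N) (hα : 0 < α)
    (hα₀ : α < 4 / (N - 4 + 2 * √(N - 1))) : (N - 2) / 2 < 2 / α := by
  have hsqrt : 1 < √(N - 1) := Real.lt_sqrt_of_sq_lt (by linarith)
  linarith [sqrt_sub_one_lt_two_div_sub hN hα hα₀]

lemma hardyExponent_nonneg (hα : 0 < α) (hsing : 2 / α ≤ N - 2) :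
    0 ≤ hardyExponent N α := by
  have hcoeff : 0 ≤ singularCoeff N α := mul_nonneg (by positivity) (sub_nonneg.mpr hsing)
  have hN : 0 < N - 2 := (div_pos two_pos hα).trans_le hsing
  refine sub_nonneg.mpr (Real.sqrt_le_iff.mpr ⟨by linarith, ?_⟩)
  have : 0 ≤ singularCoeff N α * (α + 1) := by positivity
  unfold hardyGap
  linarith

lemma decayExponent_nonneg (hα : α ≠ 0) (hhalf : (N - 2) / 2 ≤ 2 / α) (hsing : 2 / α ≤ N - 2) :
    0 ≤ decayExponent N α := by
  refine sub_nonneg.mpr (Real.sqrt_le_iff.mpr ⟨sub_nonneg.mpr hhalf, ?_⟩)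
  rw [hardyGap_eq hα]
  linarith

end Exponents

section PowerBounds

variable {r p : ℝ}

lemma rpow_neg_le_one_add_inv_rpow (hr : 0 < r) (hp : 0 ≤ p) : r ^ (-p) ≤ (1 + r⁻¹) ^ p := by
  rw [Real.rpow_neg hr.le, ← Real.inv_rpow hr.le]
  gcongr
  linarith

lemma one_add_inv_rpow_le (hr : 0 < r) (hp : 1 ≤ p) :
    (1 + r⁻¹) ^ p ≤ 2 ^ (p - 1) * (1 + r ^ (-p)) := by
  rw [Real.rpow_neg hr.le]
  lift r to NNReal using hr.le
  have h := NNReal.rpow_add_le_mul_rpow_add_rpow 1 r⁻¹ hp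
  rw [NNReal.one_rpow, NNReal.inv_rpow] at h
  exact_mod_cast h

lemma one_add_inv_rpow_le_of_le {q n : ℝ} (hr : 0 < r) (hp : 1 ≤ p) (hqp : q ≤ p)
    (hpn : p ≤ n) : (1 + r⁻¹) ^ q ≤ 2 ^ n * (1 + r ^ (-p)) := by
  have hbase : 1 ≤ 1 + r⁻¹ := by simp [hr.le]
  calc (1 + r⁻¹) ^ q ≤ (1 + r⁻¹) ^ p := Real.rpow_le_rpow_of_exponent_le hbase hqp
    _ ≤ 2 ^ (p - 1) * (1 + r ^ (-p)) := one_add_inv_rpow_le hr hp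
    _ ≤ 2 ^ n * (1 + r ^ (-p)) := by
      gcongr
      · exact one_le_two
      · linarith

end PowerBounds

section WeightBounds

variable {α ρ η K t r : ℝ}

lemma heatWeight_nonneg (hr : 0 ≤ r) : 0 ≤ heatWeight η t r := by
  unfold heatWeight
  positivity

lemma heatWeight_le (hη : 0 ≤ η) (ht : t ≤ 1) (hr : 0 < r) :
    heatWeight η t r ≤ (1 + r⁻¹) ^ η := by
  unfold heatWeight
  rw [← one_div]
  gcongr
  exact Real.sqrt_le_one.mpr ht

lemma mul_heatWeight_le {C G a s : ℝ} (hη : 0 ≤ η) (hr : 0 < r) (hs : s ≤ 1) (hC : 0 ≤ C)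
    (hG : G ≤ C * (1 + r⁻¹) ^ a) :
    G * heatWeight η s r ≤ C * (1 + r⁻¹) ^ (a + η) := by
  rw [Real.rpow_add (by positivity), ← mul_assoc]
  exact mul_le_mul hG (heatWeight_le hη hs hr) (heatWeight_nonneg hr.le) (by positivity)

lemma div_add_sqrt_rpow_le_one {κ : ℝ} (hκ : 0 ≤ κ) (hr : 0 ≤ r) : (r / (r + √t)) ^ κ ≤ 1 :=
  Real.rpow_le_one (by positivity)
    (div_le_one_of_le₀ (le_add_of_nonneg_right (Real.sqrt_nonneg t)) (by positivity)) hκ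

lemma heatWeight_rpow_le (hα : 0 < α) (hη : 0 ≤ η) (hηα : η ≤ 2 / α) (ht : t ≤ 1) (hr : 0 < r) :
    heatWeight η t r ^ α ≤ (1 + r⁻¹) ^ (2 : ℝ) := by
  have hbase : 1 ≤ 1 + r⁻¹ := by simp [hr.le]
  calc heatWeight η t r ^ α ≤ ((1 + r⁻¹) ^ η) ^ α :=
        Real.rpow_le_rpow (heatWeight_nonneg hr.le) (heatWeight_le hη ht hr) hα.le
    _ = (1 + r⁻¹) ^ (η * α) := (Real.rpow_mul (by positivity) η α).symm
    _ ≤ (1 + r⁻¹) ^ (2 : ℝ) :=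
        Real.rpow_le_rpow_of_exponent_le hbase ((le_div_iff₀ hα).mp hηα)

lemma superlinearTerm_le (hη : 0 ≤ η) (hηα : η ≤ 2 / α) (ht : t ≤ 1) (hr : 0 < r) :
    superlinearTerm α η t r ≤ (1 + r⁻¹) ^ (2 : ℝ) := by
  unfold superlinearTerm
  split_ifs with hα
  · positivity
  have hα₁ : 1 < α := not_le.mp hα
  have hbase : 1 ≤ 1 + r⁻¹ := by simp [hr.le]
  have hexp : 0 ≤ 2 * (α - 1) / α := div_nonneg (by linarith) (by linarith)
  have hsum : 2 * (α - 1) / α + η ≤ 2 := by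
    have : 2 * (α - 1) / α = 2 - 2 / α := by field_simp
    linarith
  calc r ^ (-(2 * (α - 1) / α)) * heatWeight η t r
      ≤ (1 + r⁻¹) ^ (2 * (α - 1) / α) * (1 + r⁻¹) ^ η :=
        mul_le_mul (rpow_neg_le_one_add_inv_rpow hr hexp) (heatWeight_le hη ht hr)
          (heatWeight_nonneg hr.le) (by positivity)
    _ = (1 + r⁻¹) ^ (2 * (α - 1) / α + η) := (Real.rpow_add (by positivity) _ _).symm
    _ ≤ (1 + r⁻¹) ^ (2 : ℝ) := Real.rpow_le_rpow_of_exponent_le hbase hsum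

lemma potentialBound_le (hα : 0 < α) (hρ : 0 ≤ ρ) (hη : 0 ≤ η) (hηα : η ≤ 2 / α) (hK : 0 ≤ K)
    (ht : t ≤ 1) (hr : 0 < r) :
    potentialBound α ρ η K t r ≤ (1 + K ^ α + K) * (1 + r⁻¹) ^ (2 : ℝ) := by
  have hκ : 0 ≤ ρ * min 1 α := by positivity
  have hsingular : (r / (r + √t)) ^ (ρ * min 1 α) * r ^ (-2 : ℝ) ≤ (1 + r⁻¹) ^ (2 : ℝ) :=
    (mul_le_of_le_one_left (by positivity) (div_add_sqrt_rpow_le_one hκ hr.le)).trans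
      (rpow_neg_le_one_add_inv_rpow hr zero_le_two)
  have hpower : (K * heatWeight η t r) ^ α ≤ K ^ α * (1 + r⁻¹) ^ (2 : ℝ) := by
    rw [Real.mul_rpow hK (heatWeight_nonneg hr.le)]
    gcongr
    exact heatWeight_rpow_le hα hη hηα ht hr
  have hsuper : K * superlinearTerm α η t r ≤ K * (1 + r⁻¹) ^ (2 : ℝ) :=
    mul_le_mul_of_nonneg_left (superlinearTerm_le hη hηα ht hr) hK
  unfold potentialBound
  linarith

lemma potentialBound_mul_heatWeight_bounds {N s σ : ℝ} (hα : 0 < α) (hρ : 0 ≤ ρ) (hη : 0 ≤ η)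
    (hηα : η ≤ 2 / α) (hηN : η ≤ (N - 2) / 2) (hK : 0 ≤ K)
    (ht : t ≤ 1) (hs : s ≤ 1) (hσ : σ ≤ 1) (hr : 0 < r) :
    potentialBound α ρ η K t r ≤ (1 + K ^ α + K) * 2 ^ N * (1 + r ^ (-2 : ℝ)) ∧
    potentialBound α ρ η K t r * heatWeight η s r ≤
      (1 + K ^ α + K) * 2 ^ N * (1 + r ^ (-((N + 2) / 2))) ∧
    potentialBound α ρ η K t r * heatWeight η s r * heatWeight η σ r ≤
      (1 + K ^ α + K) * 2 ^ N * (1 + r ^ (-N + ((N - 2) / 2 - η))) := by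
  have hC : 0 ≤ 1 + K ^ α + K := by positivity
  have hg := potentialBound_le hα hρ hη hηα hK ht hr
  have hgs := mul_heatWeight_le hη hr hs hC hg
  have hgsσ := mul_heatWeight_le hη hr hσ hC hgs
  rw [show -N + ((N - 2) / 2 - η) = -(N - ((N - 2) / 2 - η)) by ring]
  simp only [mul_assoc (1 + K ^ α + K)]
  refine ⟨hg.trans ?_, hgs.trans ?_, hgsσ.trans ?_⟩ <;>
    exact mul_le_mul_of_nonneg_left
      (one_add_inv_rpow_le_of_le hr (by linarith) (by linarith) (by linarith)) hC

end WeightBounds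

theorem stmt_10_general {E : Type*} [NormedAddCommGroup E] {N α K : ℝ} (hN : 2 < N)
    (hα : 2 / (N - 2) ≤ α) (hα₀ : α < 4 / (N - 4 + 2 * √(N - 1))) (hK : 0 ≤ K) :
    let ρ := decayExponent N α
    let η := hardyExponent N α
    0 < (N - 2) / 2 - η ∧
    ∃ C : ℝ, ∀ t ∈ Set.Icc (0 : ℝ) 1, ∀ s ∈ Set.Icc (0 : ℝ) 1, ∀ σ ∈ Set.Icc (0 : ℝ) 1,
      ∀ x : E, x ≠ 0 →
      potentialBound α ρ η K t ‖x‖ ≤ C * (1 + ‖x‖ ^ (-2 : ℝ)) ∧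
      potentialBound α ρ η K t ‖x‖ * heatWeight η s ‖x‖ ≤
        C * (1 + ‖x‖ ^ (-((N + 2) / 2))) ∧
      potentialBound α ρ η K t ‖x‖ * heatWeight η s ‖x‖ * heatWeight η σ ‖x‖ ≤
        C * (1 + ‖x‖ ^ (-N + ((N - 2) / 2 - η))) := by
  intro ρ η
  have hN' : 0 < N - 2 := sub_pos.mpr hN
  have hα_pos : 0 < α := (div_pos two_pos hN').trans_le hα
  have hsing : 2 / α ≤ N - 2 := (div_le_comm₀ hN' hα_pos).mp hα
  have hhalf : (N - 2) / 2 < 2 / α := half_sub_two_lt_two_div hN hα_pos hα₀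
  have hρ : 0 ≤ ρ := decayExponent_nonneg hα_pos.ne' hhalf.le hsing
  have hη : 0 ≤ η := hardyExponent_nonneg hα_pos hsing
  have hηN : η < (N - 2) / 2 := sub_lt_self _ (Real.sqrt_pos.mpr (hardyGap_pos hN hα_pos hα₀))
  refine ⟨sub_pos.mpr hηN, (1 + K ^ α + K) * 2 ^ N, fun t ht s hs σ hσ x hx ↦ ?_⟩
  exact potentialBound_mul_heatWeight_bounds hα_pos hρ hη (hηN.trans hhalf).le hηN.le hK
    ht.2 hs.2 hσ.2 (norm_pos_iff.mpr hx)

theorem stmt_10 (N : ℕ) (hN : 3 ≤ N) (α α₀ β ρ η : ℝ)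
    (hα₀ : α₀ = 4 / ((N : ℝ) - 4 + 2 * Real.sqrt ((N : ℝ) - 1)))
    (hα1 : 2 / ((N : ℝ) - 2) < α) (hα2 : α < α₀)
    (hβ : β = 2 / α * ((N : ℝ) - 2 - 2 / α))
    (hρ : ρ = 2 / α - ((N : ℝ) - 2) / 2 - Real.sqrt (((N : ℝ) - 2) ^ 2 / 4 - β * (α + 1)))
    (hη : η = ((N : ℝ) - 2) / 2 - Real.sqrt (((N : ℝ) - 2) ^ 2 / 4 - β * (α + 1)))
    (K₀ : ℝ) (hK₀ : 0 ≤ K₀)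
    -- the function g of the statement
    (g : ℝ → Euc N → ℝ)
    (hg : ∀ t : ℝ, ∀ x : Euc N, g t x =
      (‖x‖ / (‖x‖ + Real.sqrt t)) ^ (ρ * min 1 α) * ‖x‖ ^ (-2 : ℝ) +
        (K₀ * (1 + Real.sqrt t / ‖x‖) ^ η) ^ α +
        K₀ * (if α ≤ 1 then 0 else
          ‖x‖ ^ (-(2 * (α - 1) / α)) * (1 + Real.sqrt t / ‖x‖) ^ η)) :
    0 < ((N : ℝ) - 2) / 2 - η ∧
    ∃ C₁ : ℝ, ∀ t s σ : ℝ, t ∈ Set.Ioo (0 : ℝ) 1 → s ∈ Set.Ioo (0 : ℝ) 1 →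
      σ ∈ Set.Ioo (0 : ℝ) 1 → ∀ x : Euc N, x ≠ 0 →
      g t x ≤ C₁ * (1 + ‖x‖ ^ (-2 : ℝ)) ∧
      g t x * (1 + Real.sqrt s / ‖x‖) ^ η ≤ C₁ * (1 + ‖x‖ ^ (-(((N : ℝ) + 2) / 2))) ∧
      g t x * (1 + Real.sqrt s / ‖x‖) ^ η * (1 + Real.sqrt σ / ‖x‖) ^ η ≤
        C₁ * (1 + ‖x‖ ^ (-(N : ℝ) + (((N : ℝ) - 2) / 2 - η))) := by
  subst hα₀ hβ hρ hη
  obtain rfl := funext₂ hg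
  obtain ⟨hϑ, C, hC⟩ := stmt_10_general (E := Euc N) (by exact_mod_cast hN) hα1.le hα2 hK₀
  exact ⟨hϑ, C, fun t s σ ht hs hσ ↦ hC t (Set.Ioo_subset_Icc_self ht)
    s (Set.Ioo_subset_Icc_self hs) σ (Set.Ioo_subset_Icc_self hσ)⟩

end
end

section
/- Let u ∈ C²((0,∞)), u ≢ 0, be a solution of u'' + ((N−1)/r)u' + |u|^α u = 0 on (0,∞). Then the following two statements are equivalent: (1) u is a singular sign-changing solution, i.e. u takes both strictly positive and strictly negative values on (0,∞) and there exists ε ∈ {+1,−1} with r^{2/α} u(r) → ε β^{1/α} as r→0; (2) there exists r₀ > 0 such that (r₀²/2)|u'(r₀)|² + (2/α) r₀ u(r₀) u'(r₀) + (r₀²/(α+2))|u(r₀)|^{α+2} + ((4−(N−2)α)/α²)|u(r₀)|² = 0. Moreover, in this case u oscillates indefinitely as r → ∞, i.e. for every R > 0 there exists r > R with u(r) = 0. -/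
open Filter

/-!
The Emden–Fowler transform `w(t) = r ^ (2 / α) u(r)`, `r = e ^ t`, turns the radial equation into
the autonomous equation `w'' = c w' + β w - |w| ^ α w` with `c = 4 / α - (N - 2) > 0`, whose energy
is nondecreasing along orbits; statement (2) says that the energy vanishes at some time.

If it vanishes at `t₀`, it is negative before `t₀` and positive after. Negative energy keeps `w`
away from `0`, and since the energy is coercive, LaSalle's principle at `-∞` (in the form of
Barbalat's lemma) forces `w` to converge to one of the equilibria `± β ^ (1 / α)`. Positive energy
forces `w` to vanish again and again: an orbit that stays positive is eventually monotone, but it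
can remain neither above nor below the level `|w| ^ α = β (α + 2) / 2`, nor grow without bound.
Conversely the equilibria have negative energy, while the energy is nonnegative at every zero of
`w`.
-/

section General

open Set Topology Bornology

variable {E F : Type*} [NormedAddCommGroup E] [NormedSpace ℝ E]
  [NormedAddCommGroup F] [NormedSpace ℝ F]

theorem forall_pos_or_forall_neg_of_isPreconnected {X : Type*} [TopologicalSpace X] {s : Set X}
    (hs : IsPreconnected s) {f : X → ℝ} (hf : ContinuousOn f s) (hne : ∀ x ∈ s, f x ≠ 0) :
    (∀ x ∈ s, 0 < f x) ∨ ∀ x ∈ s, f x < 0 := by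
  by_contra! h
  obtain ⟨⟨a, ha, hfa⟩, b, hb, hfb⟩ := h
  obtain ⟨x, hx, hfx⟩ := hs.intermediate_value ha hb hf ⟨hfa, hfb⟩
  exact hne x hx hfx

theorem exists_pos_and_exists_neg_of_hasDerivAt_ne_zero {f : ℝ → ℝ} {f' x : ℝ}
    (hf : HasDerivAt f f' x) (hx : f x = 0) (hf' : f' ≠ 0) :
    (∃ y, 0 < f y) ∧ ∃ y, f y < 0 := by
  constructor
  · by_contra! h
    have hmax : IsLocalMax f x := Eventually.of_forall fun y => hx ▸ h y
    exact hf' (hmax.hasDerivAt_eq_zero hf)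
  · by_contra! h
    have hmin : IsLocalMin f x := Eventually.of_forall fun y => hx ▸ h y
    exact hf' (hmin.hasDerivAt_eq_zero hf)

theorem exists_abs_lt_of_hasDerivAt_of_abs_le {f f' : ℝ → ℝ} {a κ M : ℝ} (hκ : 0 < κ)
    (hf : ∀ t, a ≤ t → HasDerivAt f (f' t) t) (hM : ∀ t, a ≤ t → |f t| ≤ M) :
    ∃ t, a ≤ t ∧ |f' t| < κ := by
  have hM₀ : 0 ≤ M := (abs_nonneg _).trans (hM a le_rfl)
  set ℓ := (2 * M + 1) / κ with hℓ
  have hℓ₀ : 0 < ℓ := by positivity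
  obtain ⟨t, ht, hslope⟩ := exists_hasDerivAt_eq_slope f f' (lt_add_of_pos_right a hℓ₀)
    (fun t ht => (hf t ht.1).continuousAt.continuousWithinAt) fun t ht => hf t ht.1.le
  refine ⟨t, ht.1.le, ?_⟩
  rw [hslope, add_sub_cancel_left, abs_div, abs_of_pos hℓ₀, div_lt_iff₀ hℓ₀, hℓ,
    mul_div_cancel₀ _ hκ.ne']
  calc |f (a + ℓ) - f a| ≤ |f (a + ℓ)| + |f a| := abs_sub _ _
    _ ≤ M + M := add_le_add (hM _ (by linarith)) (hM a le_rfl)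
    _ < 2 * M + 1 := by linarith

theorem tendsto_atBot_of_hasDerivAt_le_neg {f f' : ℝ → ℝ} {a κ : ℝ} (hκ : 0 < κ)
    (hf : ∀ t, a ≤ t → HasDerivAt f (f' t) t) (hf' : ∀ t, a ≤ t → f' t ≤ -κ) :
    Tendsto f atTop atBot := by
  have hlin : ∀ t, a ≤ t → f t ≤ f a + -κ * (t - a) := by
    intro t ht
    have h := (convex_Ici a).image_sub_le_mul_sub_of_deriv_le
      (fun x hx => (hf x hx).continuousAt.continuousWithinAt)
      (fun x hx => (hf x (interior_subset hx)).differentiableAt.differentiableWithinAt)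
      (fun x hx => (hf x (interior_subset hx)).deriv ▸ hf' x (interior_subset hx))
      a self_mem_Ici t ht ht
    linarith
  have hbot : Tendsto (fun t => f a + -κ * (t - a)) atTop atBot :=
    tendsto_atBot_add_const_left _ _ <|
      (tendsto_atTop_add_const_right _ (-a) tendsto_id).const_mul_atTop_of_neg (neg_neg_of_pos hκ)
  exact tendsto_atBot_mono' _ ((eventually_ge_atTop a).mono hlin) hbot

theorem eq_zero_of_hasDerivAt_clm_apply {A : ℝ → E →L[ℝ] E} (hA : Continuous A) {z : ℝ → E}
    (hz : ∀ t, HasDerivAt z (A t (z t)) t) {t₀ : ℝ} (h₀ : z t₀ = 0) (t : ℝ) : z t = 0 := by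
  obtain ⟨a, b, ht, ht₀⟩ : ∃ a b, t ∈ Ioo a b ∧ t₀ ∈ Ioo a b :=
    ⟨min t t₀ - 1, max t t₀ + 1, by grind, by grind⟩
  obtain ⟨K, hK⟩ := isCompact_Icc.bddAbove_image (hA.nnnorm.continuousOn (s := Icc a b))
  refine ODE_solution_unique_of_mem_Ioo (v := fun s x => A s x) (s := fun _ => univ) (K := K)
    (g := fun _ => 0) (fun s hs => ?_) ht₀ (fun s _ => ⟨hz s, mem_univ _⟩)
    (fun s _ => ⟨?_, mem_univ _⟩) h₀ ht
  · have hle : ‖A s‖₊ ≤ K := hK (mem_image_of_mem _ (Ioo_subset_Icc_self hs))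
    exact ((A s).lipschitz.weaken hle).lipschitzOnWith
  · simpa using hasDerivAt_const s (0 : E)

theorem uniformContinuousOn_comp_of_isBounded_orbit [ProperSpace E] {X : Type*} [UniformSpace X]
    {G : E → E} (hG : Continuous G) {z : ℝ → E} (hz : ∀ t, HasDerivAt z (G (z t)) t)
    {s : Set ℝ} (hs : Convex ℝ s) (hbdd : IsBounded (z '' s)) {φ : E → X} (hφ : Continuous φ) :
    UniformContinuousOn (fun t => φ (z t)) s := by
  have hcpt : IsCompact (closure (z '' s)) := hbdd.isCompact_closure
  have hmem : MapsTo z s (closure (z '' s)) := fun t ht => subset_closure (mem_image_of_mem z ht)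
  obtain ⟨K, hK⟩ := hcpt.bddAbove_image hG.nnnorm.continuousOn
  have hlip : LipschitzOnWith K z s :=
    hs.lipschitzOnWith_of_nnnorm_hasDerivWithin_le (fun t _ => (hz t).hasDerivWithinAt)
      fun t ht => hK (mem_image_of_mem _ (hmem ht))
  exact (hcpt.uniformContinuousOn_of_continuous hφ.continuousOn).comp hlip.uniformContinuousOn hmem

theorem tendsto_atBot_zero_of_uniformContinuousOn_deriv {f f' : ℝ → F} {a : ℝ} {L : F}
    (hf : ∀ t, HasDerivAt f (f' t) t) (hf' : UniformContinuousOn f' (Iic a))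
    (hL : Tendsto f atBot (𝓝 L)) : Tendsto f' atBot (𝓝 0) := by
  rw [NormedAddGroup.tendsto_nhds_zero]
  intro ε hε
  obtain ⟨δ, hδ, hclose⟩ := Metric.uniformContinuousOn_iff_le.1 hf' (ε / 2) (half_pos hε)
  have hincr : Tendsto (fun t => f t - f (t - δ)) atBot (𝓝 0) := by
    simpa [sub_eq_add_neg] using hL.sub (hL.comp (tendsto_atBot_add_const_right _ (-δ) tendsto_id))
  filter_upwards [NormedAddGroup.tendsto_nhds_zero.1 hincr (δ * (ε / 2)) (by positivity),
    eventually_le_atBot a] with t ht hta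
  have hderiv : ∀ s ∈ Icc (t - δ) t,
      HasDerivWithinAt (fun s => f s - s • f' t) (f' s - f' t) (Icc (t - δ) t) s := fun s _ => by
    simpa using ((hf s).fun_sub ((hasDerivAt_id s).smul_const (f' t))).hasDerivWithinAt
  have hbound : ∀ s ∈ Ico (t - δ) t, ‖f' s - f' t‖ ≤ ε / 2 := fun s hs => by
    rw [← dist_eq_norm]
    refine hclose s (hs.2.le.trans hta) t hta ?_
    rw [Real.dist_eq, abs_le]
    constructor <;> linarith [hs.1, hs.2]
  have htaylor : ‖f t - f (t - δ) - δ • f' t‖ ≤ δ * (ε / 2) := by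
    have h := norm_image_sub_le_of_norm_deriv_le_segment' hderiv hbound t
      (right_mem_Icc.2 (by linarith))
    convert h using 1
    · congr 1
      module
    · ring
  have hmul : δ * ‖f' t‖ < δ * ε := by
    calc δ * ‖f' t‖ = ‖δ • f' t‖ := by rw [norm_smul, Real.norm_of_nonneg hδ.le]
      _ ≤ ‖f t - f (t - δ)‖ + ‖f t - f (t - δ) - δ • f' t‖ := norm_le_norm_add_norm_sub _ _
      _ < δ * (ε / 2) + δ * (ε / 2) := add_lt_add_of_lt_of_le ht htaylor
      _ = δ * ε := by ring
  exact lt_of_mul_lt_mul_left hmul hδ.le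

theorem tendsto_atBot_zero_of_isBounded_orbit [ProperSpace E] {G : E → E} (hG : Continuous G)
    {z : ℝ → E} (hz : ∀ t, HasDerivAt z (G (z t)) t) {a : ℝ} (hbdd : IsBounded (z '' Iic a))
    {φ : E → F} (hφ : Continuous φ) {f : ℝ → F} (hf : ∀ t, HasDerivAt f (φ (z t)) t) {L : F}
    (hL : Tendsto f atBot (𝓝 L)) : Tendsto (fun t => φ (z t)) atBot (𝓝 0) :=
  tendsto_atBot_zero_of_uniformContinuousOn_deriv hf
    (uniformContinuousOn_comp_of_isBounded_orbit hG hz (convex_Iic a) hbdd hφ) hL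

end General

section Energy

/-- The energy of a point `(x, y)` of the phase plane of
`w'' = c w' + β w - |w| ^ α w`, where `x` stands for `w` and `y` for `w'`: it is conserved when
`c = 0`. -/
noncomputable def emdenEnergy (α β x y : ℝ) : ℝ :=
  y ^ 2 / 2 - β * x ^ 2 / 2 + |x| ^ (α + 2) / (α + 2)

variable {α β x y : ℝ}

theorem continuous_abs_rpow (hα : 0 ≤ α) : Continuous fun x : ℝ => |x| ^ α :=
  continuous_abs.rpow_const fun _ => Or.inr hα

theorem emdenEnergy_neg : emdenEnergy α β (-x) (-y) = emdenEnergy α β x y := by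
  simp only [emdenEnergy, neg_sq, abs_neg]

theorem continuous_emdenEnergy (hα : 0 < α) :
    Continuous fun q : ℝ × ℝ => emdenEnergy α β q.1 q.2 := by
  have hpow : Continuous fun q : ℝ × ℝ => |q.1| ^ (α + 2) :=
    (continuous_abs_rpow (by positivity)).comp continuous_fst
  unfold emdenEnergy
  fun_prop

theorem abs_rpow_add_two (hα : 0 < α) (x : ℝ) : |x| ^ (α + 2) = |x| ^ α * x ^ 2 := by
  rw [Real.rpow_add' (abs_nonneg x) (by positivity), Real.rpow_two, sq_abs]

theorem emdenEnergy_eq (hα : 0 < α) (β x y : ℝ) :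
    emdenEnergy α β x y = y ^ 2 / 2 + x ^ 2 * (|x| ^ α / (α + 2) - β / 2) := by
  rw [emdenEnergy, abs_rpow_add_two hα]
  ring

theorem emdenEnergy_zero_left (hα : 0 < α) : emdenEnergy α β 0 y = y ^ 2 / 2 := by
  simp [emdenEnergy_eq hα]

theorem ne_zero_of_emdenEnergy_neg (hα : 0 < α) (h : emdenEnergy α β x y < 0) : x ≠ 0 := by
  rintro rfl
  rw [emdenEnergy_zero_left hα] at h
  linarith [sq_nonneg y]

theorem neg_two_mul_emdenEnergy_le (hα : 0 < α) : -2 * emdenEnergy α β x y ≤ β * x ^ 2 := by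
  have hpow : 0 ≤ |x| ^ (α + 2) / (α + 2) := by positivity
  rw [emdenEnergy]
  linarith [sq_nonneg y]

theorem emdenEnergy_equilibrium_neg (hα : 0 < α) (hβ : 0 < β) (hx : |x| ^ α = β) :
    emdenEnergy α β x 0 < 0 := by
  have hx₀ : x ≠ 0 := by
    rintro rfl
    rw [abs_zero, Real.zero_rpow hα.ne'] at hx
    exact hβ.ne hx
  have hlt : β / (α + 2) < β / 2 := div_lt_div_of_pos_left hβ two_pos (by linarith)
  rw [emdenEnergy_eq hα, hx, zero_pow two_ne_zero, zero_div, zero_add]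
  exact mul_neg_of_pos_of_neg (by positivity) (by linarith)

theorem lt_mul_add_two_div_two (hα : 0 < α) (hβ : 0 < β) : β < β * (α + 2) / 2 := by
  nlinarith

theorem two_mul_emdenEnergy_le_sq (hα : 0 < α) (hx : |x| ^ α ≤ β * (α + 2) / 2) :
    2 * emdenEnergy α β x y ≤ y ^ 2 := by
  have hpot : |x| ^ α / (α + 2) - β / 2 ≤ 0 := by
    rw [sub_nonpos, div_le_iff₀ (by positivity)]
    linarith
  rw [emdenEnergy_eq hα]
  linarith [mul_nonpos_of_nonneg_of_nonpos (sq_nonneg x) hpot]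

theorem lt_abs_rpow_of_emdenEnergy_pos (hα : 0 < α) (h : 0 < emdenEnergy α β x 0) :
    β * (α + 2) / 2 < |x| ^ α := by
  by_contra! hx
  linarith [two_mul_emdenEnergy_le_sq (y := 0) hα hx]

theorem exists_sq_add_sq_le_emdenEnergy_add (hα : 0 < α) (hβ : 0 < β) :
    ∃ K, ∀ x y : ℝ, x ^ 2 + y ^ 2 / 2 ≤ emdenEnergy α β x y + K := by
  -- Beyond the amplitude `R` the potential exceeds `x ^ 2`.
  set R : ℝ := ((α + 2) * (β / 2 + 1)) ^ α⁻¹ with hR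
  refine ⟨(β / 2 + 1) * R ^ 2, fun x y => ?_⟩
  rw [emdenEnergy_eq hα]
  rcases le_total |x| R with hx | hx
  · have hx2 : x ^ 2 ≤ R ^ 2 := sq_le_sq.2 (hx.trans (le_abs_self R))
    have hpow : 0 ≤ x ^ 2 * (|x| ^ α / (α + 2)) := by positivity
    nlinarith
  · have hbase : 0 ≤ (α + 2) * (β / 2 + 1) := by positivity
    have hpow : (α + 2) * (β / 2 + 1) ≤ |x| ^ α := by
      calc (α + 2) * (β / 2 + 1) = R ^ α := by rw [hR, Real.rpow_inv_rpow hbase hα.ne']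
        _ ≤ |x| ^ α := Real.rpow_le_rpow (by positivity) hx hα.le
    have hpot : β / 2 + 1 ≤ |x| ^ α / (α + 2) := by
      rw [le_div_iff₀ (by positivity)]
      linarith
    nlinarith [mul_le_mul_of_nonneg_left hpot (sq_nonneg x), mul_nonneg hβ.le (sq_nonneg R),
      sq_nonneg R]

theorem isBounded_emdenEnergy_sublevel (hα : 0 < α) (hβ : 0 < β) (e : ℝ) :
    Bornology.IsBounded {q : ℝ × ℝ | emdenEnergy α β q.1 q.2 ≤ e} := by
  obtain ⟨K, hK⟩ := exists_sq_add_sq_le_emdenEnergy_add hα hβ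
  refine isBounded_iff_forall_norm_le.2 ⟨Real.sqrt (2 * (e + K)), fun q hq => ?_⟩
  have hle : q.1 ^ 2 + q.2 ^ 2 / 2 ≤ e + K := (hK q.1 q.2).trans (by gcongr; exact hq)
  refine max_le (Real.abs_le_sqrt ?_) (Real.abs_le_sqrt ?_) <;>
    linarith [sq_nonneg q.1, sq_nonneg q.2]

end Energy

section Orbit

open Set Topology

/-- `w` is a solution of the autonomous equation `w'' = c w' + β w - |w| ^ α w` on `ℝ`, and `p` is
its derivative. -/
structure IsEmdenOrbit (α β c : ℝ) (w p : ℝ → ℝ) : Prop where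
  hasDerivAt_fst : ∀ t, HasDerivAt w (p t) t
  hasDerivAt_snd : ∀ t, HasDerivAt p (c * p t + β * w t - |w t| ^ α * w t) t

namespace IsEmdenOrbit

variable {α β c : ℝ} {w p : ℝ → ℝ} {t₀ : ℝ}

protected theorem neg (h : IsEmdenOrbit α β c w p) :
    IsEmdenOrbit α β c (fun t => -w t) fun t => -p t where
  hasDerivAt_fst t := (h.hasDerivAt_fst t).neg
  hasDerivAt_snd t := (h.hasDerivAt_snd t).neg.congr_deriv (by rw [abs_neg]; ring)

protected theorem continuous_fst (h : IsEmdenOrbit α β c w p) : Continuous w :=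
  continuous_iff_continuousAt.2 fun t => (h.hasDerivAt_fst t).continuousAt

protected theorem continuous_snd (h : IsEmdenOrbit α β c w p) : Continuous p :=
  continuous_iff_continuousAt.2 fun t => (h.hasDerivAt_snd t).continuousAt

theorem hasDerivAt_energy (h : IsEmdenOrbit α β c w p) (hα : 0 < α) (t : ℝ) :
    HasDerivAt (fun t => emdenEnergy α β (w t) (p t)) (c * p t ^ 2) t := by
  have hpow : HasDerivAt (fun t => |w t| ^ (α + 2)) ((α + 2) * |w t| ^ α * w t * p t) t := by
    refine ((hasDerivAt_abs_rpow (w t) (by linarith)).comp t (h.hasDerivAt_fst t)).congr_deriv ?_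
    rw [add_sub_cancel_right]
  have hkin := ((h.hasDerivAt_snd t).fun_pow 2).div_const 2
  have hpot := (((h.hasDerivAt_fst t).fun_pow 2).const_mul β).div_const 2
  refine ((hkin.sub hpot).add (hpow.div_const (α + 2))).congr_deriv ?_
  field_simp
  ring

theorem continuous_energy (h : IsEmdenOrbit α β c w p) (hα : 0 < α) :
    Continuous fun t => emdenEnergy α β (w t) (p t) :=
  (continuous_emdenEnergy hα).comp (h.continuous_fst.prodMk h.continuous_snd)

theorem monotone_energy (h : IsEmdenOrbit α β c w p) (hα : 0 < α) (hc : 0 ≤ c) :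
    Monotone fun t => emdenEnergy α β (w t) (p t) :=
  monotone_of_hasDerivAt_nonneg (h.hasDerivAt_energy hα) fun t => by positivity

theorem eq_zero_of_fst_eq_zero_of_snd_eq_zero (h : IsEmdenOrbit α β c w p) (hα : 0 < α)
    (hw : w t₀ = 0) (hp : p t₀ = 0) (t : ℝ) : w t = 0 := by
  -- Along the given orbit the equation is linear with a continuous time-dependent potential.
  let A : ℝ → ℝ × ℝ →L[ℝ] ℝ × ℝ := fun t =>
    (ContinuousLinearMap.snd ℝ ℝ ℝ).prod
      (c • ContinuousLinearMap.snd ℝ ℝ ℝ + (β - |w t| ^ α) • ContinuousLinearMap.fst ℝ ℝ ℝ)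
  have hpow : Continuous fun t => |w t| ^ α :=
    (continuous_abs_rpow hα.le).comp h.continuous_fst
  have hA : Continuous A := (ContinuousLinearMap.prodₗᵢ ℝ).continuous.comp
    (continuous_const.prodMk (by fun_prop))
  have hz (t : ℝ) : HasDerivAt (fun t => (w t, p t)) (A t (w t, p t)) t := by
    refine ((h.hasDerivAt_fst t).prodMk (h.hasDerivAt_snd t)).congr_deriv ?_
    simp [A]
    ring
  exact congr_arg Prod.fst (eq_zero_of_hasDerivAt_clm_apply hA hz (Prod.ext hw hp) t)

theorem exists_equilibrium_of_energy_eq (h : IsEmdenOrbit α β c w p) (hα : 0 < α) (hc : 0 < c)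
    {a b : ℝ} (hab : a < b)
    (heq : emdenEnergy α β (w a) (p a) = emdenEnergy α β (w b) (p b)) :
    ∃ t ∈ Ioo a b, emdenEnergy α β (w t) (p t) = emdenEnergy α β (w a) (p a) ∧
      p t = 0 ∧ (w t = 0 ∨ |w t| ^ α = β) := by
  have hmono := h.monotone_energy hα hc.le
  have hconst : ∀ t ∈ Ioo a b, emdenEnergy α β (w t) (p t) = emdenEnergy α β (w a) (p a) :=
    fun t ht => le_antisymm ((hmono ht.2.le).trans heq.ge) (hmono ht.1.le)
  have hp : ∀ t ∈ Ioo a b, p t = 0 := fun t ht => by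
    have hloc : (fun t => emdenEnergy α β (w t) (p t)) =ᶠ[𝓝 t]
        fun _ => emdenEnergy α β (w a) (p a) :=
      (isOpen_Ioo.eventually_mem ht).mono hconst
    have hzero : c * p t ^ 2 = 0 :=
      (h.hasDerivAt_energy hα t).unique ((hasDerivAt_const t _).congr_of_eventuallyEq hloc)
    simpa [hc.ne'] using hzero
  obtain ⟨t, ht⟩ := exists_between hab
  refine ⟨t, ht, hconst t ht, hp t ht, ?_⟩
  have hloc : p =ᶠ[𝓝 t] fun _ => 0 := (isOpen_Ioo.eventually_mem ht).mono hp
  have hforce := (h.hasDerivAt_snd t).unique ((hasDerivAt_const t _).congr_of_eventuallyEq hloc)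
  rw [hp t ht, mul_zero, zero_add, ← sub_mul] at hforce
  rcases mul_eq_zero.1 hforce with hβ | hw
  · exact Or.inr (by linarith)
  · exact Or.inl hw

theorem energy_ne_of_energy_eq_zero (h : IsEmdenOrbit α β c w p) (hα : 0 < α) (hβ : 0 < β)
    (hc : 0 < c) (hne : ∃ t, w t ≠ 0) {a b : ℝ} (hab : a < b)
    (hzero : emdenEnergy α β (w a) (p a) = 0) : emdenEnergy α β (w b) (p b) ≠ 0 := by
  intro hb
  obtain ⟨t, -, hE, hp, hw | hw⟩ :=
    h.exists_equilibrium_of_energy_eq hα hc hab (hzero.trans hb.symm)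
  · obtain ⟨s, hs⟩ := hne
    exact hs (h.eq_zero_of_fst_eq_zero_of_snd_eq_zero hα hw hp s)
  · rw [hp, hzero] at hE
    exact (emdenEnergy_equilibrium_neg hα hβ hw).ne hE

theorem energy_pos_of_lt (h : IsEmdenOrbit α β c w p) (hα : 0 < α) (hβ : 0 < β) (hc : 0 < c)
    (hne : ∃ t, w t ≠ 0) (hzero : emdenEnergy α β (w t₀) (p t₀) = 0) {t : ℝ} (ht : t₀ < t) :
    0 < emdenEnergy α β (w t) (p t) :=
  (hzero.ge.trans (h.monotone_energy hα hc.le ht.le)).lt_of_ne'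
    (h.energy_ne_of_energy_eq_zero hα hβ hc hne ht hzero)

theorem energy_neg_of_lt (h : IsEmdenOrbit α β c w p) (hα : 0 < α) (hβ : 0 < β) (hc : 0 < c)
    (hne : ∃ t, w t ≠ 0) (hzero : emdenEnergy α β (w t₀) (p t₀) = 0) {t : ℝ} (ht : t < t₀) :
    emdenEnergy α β (w t) (p t) < 0 :=
  ((h.monotone_energy hα hc.le ht.le).trans hzero.le).lt_of_ne fun hE =>
    h.energy_ne_of_energy_eq_zero hα hβ hc hne ht hE hzero

theorem isBounded_orbit_Iic (h : IsEmdenOrbit α β c w p) (hα : 0 < α) (hβ : 0 < β) (hc : 0 ≤ c)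
    (a : ℝ) : Bornology.IsBounded ((fun t => (w t, p t)) '' Iic a) :=
  (isBounded_emdenEnergy_sublevel hα hβ (emdenEnergy α β (w a) (p a))).subset <|
    image_subset_iff.2 fun _ ht => h.monotone_energy hα hc ht

theorem exists_tendsto_energy_atBot (h : IsEmdenOrbit α β c w p) (hα : 0 < α) (hβ : 0 < β)
    (hc : 0 ≤ c) : ∃ L, Tendsto (fun t => emdenEnergy α β (w t) (p t)) atBot (𝓝 L) := by
  obtain ⟨K, hK⟩ := exists_sq_add_sq_le_emdenEnergy_add hα hβ
  refine ⟨_, tendsto_atBot_ciInf (h.monotone_energy hα hc) ⟨-K, ?_⟩⟩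
  rintro _ ⟨t, rfl⟩
  linarith [hK (w t) (p t), sq_nonneg (w t), sq_nonneg (p t)]

theorem tendsto_atBot_zero_of_primitive (h : IsEmdenOrbit α β c w p) (hα : 0 < α) (hβ : 0 < β)
    (hc : 0 ≤ c) {φ : ℝ × ℝ → ℝ} (hφ : Continuous φ) {f : ℝ → ℝ}
    (hf : ∀ t, HasDerivAt f (φ (w t, p t)) t) {L : ℝ} (hL : Tendsto f atBot (𝓝 L)) :
    Tendsto (fun t => φ (w t, p t)) atBot (𝓝 0) := by
  have hpow : Continuous fun q : ℝ × ℝ => |q.1| ^ α :=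
    (continuous_abs_rpow hα.le).comp continuous_fst
  exact tendsto_atBot_zero_of_isBounded_orbit
    (G := fun q : ℝ × ℝ => (q.2, c * q.2 + β * q.1 - |q.1| ^ α * q.1)) (by fun_prop)
    (fun t => (h.hasDerivAt_fst t).prodMk (h.hasDerivAt_snd t))
    (h.isBounded_orbit_Iic hα hβ hc 0) hφ hf hL

theorem tendsto_snd_atBot (h : IsEmdenOrbit α β c w p) (hα : 0 < α) (hβ : 0 < β) (hc : 0 < c) :
    Tendsto p atBot (𝓝 0) := by
  obtain ⟨L, hL⟩ := h.exists_tendsto_energy_atBot hα hβ hc.le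
  have hdiss : Tendsto (fun t => c * p t ^ 2) atBot (𝓝 0) :=
    h.tendsto_atBot_zero_of_primitive hα hβ hc.le (φ := fun q => c * q.2 ^ 2) (by fun_prop)
      (h.hasDerivAt_energy hα) hL
  have hsq : Tendsto (fun t => p t ^ 2) atBot (𝓝 0) := by
    simpa [hc.ne'] using hdiss.const_mul c⁻¹
  rw [tendsto_zero_iff_abs_tendsto_zero]
  simpa [Function.comp_def, Real.sqrt_sq_eq_abs] using hsq.sqrt

theorem tendsto_sub_abs_rpow_mul_atBot (h : IsEmdenOrbit α β c w p) (hα : 0 < α) (hβ : 0 < β)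
    (hc : 0 < c) : Tendsto (fun t => (β - |w t| ^ α) * w t) atBot (𝓝 0) := by
  have hp := h.tendsto_snd_atBot hα hβ hc
  have hpow : Continuous fun q : ℝ × ℝ => |q.1| ^ α :=
    (continuous_abs_rpow hα.le).comp continuous_fst
  have hforce := h.tendsto_atBot_zero_of_primitive hα hβ hc.le
    (φ := fun q => c * q.2 + β * q.1 - |q.1| ^ α * q.1) (by fun_prop) h.hasDerivAt_snd hp
  convert hforce.sub (hp.const_mul c) using 2
  · ring
  · ring

theorem tendsto_abs_atBot (h : IsEmdenOrbit α β c w p) (hα : 0 < α) (hβ : 0 < β) (hc : 0 < c)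
    (hneg : emdenEnergy α β (w t₀) (p t₀) < 0) :
    Tendsto (fun t => |w t|) atBot (𝓝 (β ^ (1 / α))) := by
  obtain ⟨m, hm, hmw⟩ : ∃ m > 0, ∀ t ≤ t₀, m ≤ |w t| := by
    refine ⟨√(-2 * emdenEnergy α β (w t₀) (p t₀) / β),
      Real.sqrt_pos.2 (div_pos (by linarith) hβ), fun t ht => Real.sqrt_le_iff.2 ⟨abs_nonneg _, ?_⟩⟩
    rw [sq_abs, div_le_iff₀' hβ]
    linarith [neg_two_mul_emdenEnergy_le (β := β) (x := w t) (y := p t) hα,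
      h.monotone_energy hα hc.le ht]
  have hpow : Tendsto (fun t => |w t| ^ α) atBot (𝓝 β) := by
    have hgap : Tendsto (fun t => β - |w t| ^ α) atBot (𝓝 0) := by
      have hdom := (h.tendsto_sub_abs_rpow_mul_atBot hα hβ hc).norm.div_const m
      rw [norm_zero, zero_div] at hdom
      refine squeeze_zero_norm' ?_ hdom
      filter_upwards [eventually_le_atBot t₀] with t ht
      rw [le_div_iff₀ hm, norm_mul]
      exact mul_le_mul_of_nonneg_left (hmw t ht) (norm_nonneg _)
    simpa using hgap.const_sub β
  convert hpow.rpow_const (Or.inr (by positivity : 0 ≤ 1 / α)) using 2 with t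
  rw [one_div, Real.rpow_rpow_inv (abs_nonneg _) hα.ne']

theorem exists_tendsto_atBot (h : IsEmdenOrbit α β c w p) (hα : 0 < α) (hβ : 0 < β) (hc : 0 < c)
    (hneg : emdenEnergy α β (w t₀) (p t₀) < 0) :
    ∃ ε : ℝ, (ε = 1 ∨ ε = -1) ∧ Tendsto w atBot (𝓝 (ε * β ^ (1 / α))) := by
  have habs := h.tendsto_abs_atBot hα hβ hc hneg
  have hne : ∀ t ∈ Iic t₀, w t ≠ 0 := fun t ht =>
    ne_zero_of_emdenEnergy_neg hα ((h.monotone_energy hα hc.le ht).trans_lt hneg)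
  rcases forall_pos_or_forall_neg_of_isPreconnected isPreconnected_Iic
    h.continuous_fst.continuousOn hne with hpos | hneg
  · refine ⟨1, Or.inl rfl, ?_⟩
    rw [one_mul]
    exact habs.congr' ((eventually_le_atBot t₀).mono fun t ht => abs_of_pos (hpos t ht))
  · refine ⟨-1, Or.inr rfl, ?_⟩
    rw [neg_one_mul]
    exact habs.neg.congr' ((eventually_le_atBot t₀).mono fun t ht => by
      rw [abs_of_neg (hneg t ht), neg_neg])

theorem exists_energy_eq_zero (h : IsEmdenOrbit α β c w p) (hα : 0 < α) (hβ : 0 < β) (hc : 0 < c)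
    {L : ℝ} (hL : |L| ^ α = β) (hlim : Tendsto w atBot (𝓝 L)) (hzero : ∃ t, w t = 0) :
    ∃ t, emdenEnergy α β (w t) (p t) = 0 := by
  have horbit : Tendsto (fun t => (w t, p t)) atBot (𝓝 (L, 0)) :=
    hlim.prodMk_nhds (h.tendsto_snd_atBot hα hβ hc)
  have hE : Tendsto (fun t => emdenEnergy α β (w t) (p t)) atBot (𝓝 (emdenEnergy α β L 0)) := by
    simpa only [Function.comp_def] using ((continuous_emdenEnergy hα).tendsto (L, 0)).comp horbit
  obtain ⟨a, ha⟩ := (hE.eventually_lt_const (emdenEnergy_equilibrium_neg hα hβ hL)).exists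
  obtain ⟨b, hb⟩ := hzero
  refine mem_range_of_exists_le_of_exists_ge (h.continuous_energy hα) ⟨a, ha.le⟩ ⟨b, ?_⟩
  rw [hb, emdenEnergy_zero_left hα]
  positivity

theorem exists_lt_abs_rpow_of_energy_pos (h : IsEmdenOrbit α β c w p) (hα : 0 < α) (hc : 0 ≤ c)
    (hE : 0 < emdenEnergy α β (w t₀) (p t₀)) {M : ℝ} (hM : ∀ t, t₀ ≤ t → |w t| ≤ M) :
    ∃ t, t₀ ≤ t ∧ β * (α + 2) / 2 < |w t| ^ α := by
  obtain ⟨t, ht, hpt⟩ := exists_abs_lt_of_hasDerivAt_of_abs_le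
    (Real.sqrt_pos.2 (mul_pos two_pos hE)) (fun t _ => h.hasDerivAt_fst t) hM
  refine ⟨t, ht, lt_of_not_ge fun hle => ?_⟩
  rw [Real.lt_sqrt (abs_nonneg _), sq_abs] at hpt
  linarith [two_mul_emdenEnergy_le_sq (y := p t) hα hle, h.monotone_energy hα hc ht]

theorem exists_abs_rpow_lt_of_pos (h : IsEmdenOrbit α β c w p) (hα : 0 < α) (hβ : 0 ≤ β)
    (hc : 0 ≤ c) (hpos : ∀ t, t₀ ≤ t → 0 < w t) {M : ℝ} (hM : ∀ t, t₀ ≤ t → w t ≤ M) {A : ℝ}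
    (hA : β < A) : ∃ t, t₀ ≤ t ∧ |w t| ^ α < A := by
  by_contra! hge
  have hA₀ : 0 < A := hβ.trans_lt hA
  have hm : ∀ t, t₀ ≤ t → A ^ α⁻¹ ≤ w t := fun t ht => by
    rw [Real.rpow_inv_le_iff_of_pos (by positivity) (hpos t ht).le hα, ← abs_of_pos (hpos t ht)]
    exact hge t ht
  have hq : ∀ t, t₀ ≤ t → HasDerivAt (fun t => p t - c * w t) (-((|w t| ^ α - β) * w t)) t :=
    fun t _ => ((h.hasDerivAt_snd t).fun_sub ((h.hasDerivAt_fst t).const_mul c)).congr_deriv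
      (by ring)
  have hqbot : Tendsto (fun t => p t - c * w t) atTop atBot :=
    tendsto_atBot_of_hasDerivAt_le_neg (κ := (A - β) * A ^ α⁻¹)
      (mul_pos (sub_pos.2 hA) (by positivity)) hq fun t ht =>
      neg_le_neg (mul_le_mul (by linarith [hge t ht]) (hm t ht) (by positivity)
        (by linarith [hge t ht]))
  obtain ⟨t₁, ht₁⟩ := eventually_atTop.1
    ((hqbot.eventually_le_atBot (-1 - c * M)).and (eventually_ge_atTop t₀))
  have hwbot : Tendsto w atTop atBot :=
    tendsto_atBot_of_hasDerivAt_le_neg one_pos (fun t _ => h.hasDerivAt_fst t) fun t ht => by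
      linarith [(ht₁ t ht).1, mul_le_mul_of_nonneg_left (hM t (ht₁ t ht).2) hc]
  obtain ⟨t, ht, ht'⟩ := ((hwbot.eventually_le_atBot 0).and (eventually_ge_atTop t₀)).exists
  exact (hpos t ht').not_ge ht

theorem exists_snd_neg_of_le_abs_rpow (h : IsEmdenOrbit α β c w p)
    (hpos : ∀ t, t₀ ≤ t → 0 < w t) (hlarge : ∀ t, t₀ ≤ t → c ^ 2 / 4 + β + 1 ≤ |w t| ^ α) :
    ∃ t, t₀ ≤ t ∧ p t < 0 := by
  by_contra! hp
  have hriccati : ∀ t, t₀ ≤ t → HasDerivAt (fun t => p t / w t)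
      (c * (p t / w t) - (p t / w t) ^ 2 + β - |w t| ^ α) t := fun t ht => by
    have hw := (hpos t ht).ne'
    refine ((h.hasDerivAt_snd t).fun_div (h.hasDerivAt_fst t) hw).congr_deriv ?_
    field_simp
    ring
  have hbot : Tendsto (fun t => p t / w t) atTop atBot :=
    tendsto_atBot_of_hasDerivAt_le_neg one_pos hriccati fun t ht => by
      linarith [hlarge t ht, sq_nonneg (p t / w t - c / 2)]
  obtain ⟨t, ht, ht'⟩ := ((hbot.eventually_lt_atBot 0).and (eventually_ge_atTop t₀)).exists
  exact (div_nonneg (hp t ht') (hpos t ht').le).not_gt ht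

theorem snd_nonpos_of_energy_pos (h : IsEmdenOrbit α β c w p) (hα : 0 < α) (hβ : 0 < β)
    (hc : 0 ≤ c) (hE : 0 < emdenEnergy α β (w t₀) (p t₀)) (hpos : ∀ t, t₀ ≤ t → 0 < w t)
    (hp : p t₀ ≤ 0) {t : ℝ} (ht : t₀ ≤ t) : p t ≤ 0 := by
  refine image_le_of_deriv_right_lt_deriv_boundary (B := fun _ => 0) (B' := fun _ => 0)
    h.continuous_snd.continuousOn (fun s _ => (h.hasDerivAt_snd s).hasDerivWithinAt) hp
    (fun s => hasDerivAt_const s 0) (fun s hs hps => ?_) ⟨ht, le_rfl⟩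
  have hEs : 0 < emdenEnergy α β (w s) (p s) := hE.trans_le (h.monotone_energy hα hc hs.1)
  rw [hps] at hEs
  have hβw : β < |w s| ^ α :=
    (lt_mul_add_two_div_two hα hβ).trans (lt_abs_rpow_of_emdenEnergy_pos hα hEs)
  rw [hps]
  nlinarith [hpos s hs.1]

theorem exists_snd_nonpos_of_energy_pos (h : IsEmdenOrbit α β c w p) (hα : 0 < α) (hβ : 0 < β)
    (hc : 0 ≤ c) (hE : 0 < emdenEnergy α β (w t₀) (p t₀)) (hpos : ∀ t, t₀ ≤ t → 0 < w t) :
    ∃ t, t₀ ≤ t ∧ p t ≤ 0 := by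
  by_contra! hp
  have hmono : MonotoneOn w (Ici t₀) :=
    monotoneOn_of_hasDerivWithinAt_nonneg (convex_Ici t₀) h.continuous_fst.continuousOn
      (fun t _ => (h.hasDerivAt_fst t).hasDerivWithinAt) fun t ht => (hp t (interior_subset ht)).le
  have hpow : MonotoneOn (fun t => |w t| ^ α) (Ici t₀) := fun s hs t ht hst =>
    Real.rpow_le_rpow (abs_nonneg _) (abs_le_abs_of_nonneg (hpos s hs).le (hmono hs ht hst)) hα.le
  by_cases hbdd : ∃ M, ∀ t, t₀ ≤ t → w t ≤ M
  · obtain ⟨M, hM⟩ := hbdd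
    obtain ⟨a, ha, hwa⟩ := h.exists_lt_abs_rpow_of_energy_pos hα hc hE (M := M) fun t ht => by
      rw [abs_of_pos (hpos t ht)]
      exact hM t ht
    obtain ⟨b, hb, hwb⟩ := h.exists_abs_rpow_lt_of_pos hα hβ.le hc
      (fun t ht => hpos t (ha.trans ht)) (fun t ht => hM t (ha.trans ht))
      (lt_mul_add_two_div_two hα hβ)
    exact (hpow ha (ha.trans hb) hb).not_gt (hwb.trans hwa)
  · push Not at hbdd
    obtain ⟨a, ha, hwa⟩ := hbdd ((c ^ 2 / 4 + β + 1) ^ α⁻¹)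
    have hlarge : c ^ 2 / 4 + β + 1 ≤ |w a| ^ α := by
      rw [← Real.rpow_inv_le_iff_of_pos (by positivity) (abs_nonneg _) hα]
      exact hwa.le.trans (le_abs_self _)
    obtain ⟨t, ht, hpt⟩ := h.exists_snd_neg_of_le_abs_rpow (fun t ht => hpos t (ha.trans ht))
      fun t ht => hlarge.trans (hpow ha (ha.trans ht) ht)
    exact (hp t (ha.trans ht)).not_gt hpt

theorem exists_fst_nonpos_of_energy_pos (h : IsEmdenOrbit α β c w p) (hα : 0 < α) (hβ : 0 < β)
    (hc : 0 ≤ c) (hE : 0 < emdenEnergy α β (w t₀) (p t₀)) : ∃ t, t₀ ≤ t ∧ w t ≤ 0 := by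
  by_contra! hpos
  obtain ⟨a, ha, hpa⟩ := h.exists_snd_nonpos_of_energy_pos hα hβ hc hE hpos
  have hEa : 0 < emdenEnergy α β (w a) (p a) := hE.trans_le (h.monotone_energy hα hc ha)
  have hanti : AntitoneOn w (Ici a) :=
    antitoneOn_of_hasDerivWithinAt_nonpos (convex_Ici a) h.continuous_fst.continuousOn
      (fun t _ => (h.hasDerivAt_fst t).hasDerivWithinAt) fun t ht =>
        h.snd_nonpos_of_energy_pos hα hβ hc hEa (fun s hs => hpos s (ha.trans hs)) hpa
          (interior_subset ht)
  obtain ⟨b, hb, hwb⟩ := h.exists_abs_rpow_lt_of_pos hα hβ.le hc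
    (fun t ht => hpos t (ha.trans ht)) (fun t ht => hanti self_mem_Ici ht ht)
    (lt_mul_add_two_div_two hα hβ)
  have hEb : 0 < emdenEnergy α β (w b) (p b) := hEa.trans_le (h.monotone_energy hα hc hb)
  have hle : ∀ t, b ≤ t → |w t| ≤ |w b| := fun t ht =>
    abs_le_abs_of_nonneg (hpos t (ha.trans (hb.trans ht))).le (hanti hb (hb.trans ht) ht)
  obtain ⟨d, hd, hwd⟩ := h.exists_lt_abs_rpow_of_energy_pos hα hc hEb hle
  exact (Real.rpow_le_rpow (abs_nonneg _) (hle d hd) hα.le).not_gt (hwb.trans hwd)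

theorem exists_fst_eq_zero_of_energy_pos (h : IsEmdenOrbit α β c w p) (hα : 0 < α) (hβ : 0 < β)
    (hc : 0 ≤ c) (hE : 0 < emdenEnergy α β (w t₀) (p t₀)) : ∃ t, t₀ ≤ t ∧ w t = 0 := by
  obtain ⟨a, ha, hwa⟩ := h.exists_fst_nonpos_of_energy_pos hα hβ hc hE
  obtain ⟨b, hb, hwb⟩ := h.neg.exists_fst_nonpos_of_energy_pos hα hβ hc (emdenEnergy_neg ▸ hE)
  exact isPreconnected_Ici.intermediate_value ha hb h.continuous_fst.continuousOn
    ⟨hwa, neg_nonpos.1 hwb⟩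

theorem exists_gt_fst_eq_zero (h : IsEmdenOrbit α β c w p) (hα : 0 < α) (hβ : 0 < β) (hc : 0 < c)
    (hne : ∃ t, w t ≠ 0) (hzero : emdenEnergy α β (w t₀) (p t₀) = 0) (T : ℝ) :
    ∃ t, T < t ∧ w t = 0 := by
  obtain ⟨b, hTb⟩ := exists_gt (max T t₀)
  obtain ⟨hT, ht₀⟩ := max_lt_iff.1 hTb
  obtain ⟨t, ht, hwt⟩ := h.exists_fst_eq_zero_of_energy_pos hα hβ hc.le
    (h.energy_pos_of_lt hα hβ hc hne hzero ht₀)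
  exact ⟨t, hT.trans_le ht, hwt⟩

theorem exists_pos_and_exists_neg (h : IsEmdenOrbit α β c w p) (hα : 0 < α) (hβ : 0 < β)
    (hc : 0 < c) (hne : ∃ t, w t ≠ 0) (hzero : emdenEnergy α β (w t₀) (p t₀) = 0) :
    (∃ t, 0 < w t) ∧ ∃ t, w t < 0 := by
  obtain ⟨t, ht, hwt⟩ := h.exists_gt_fst_eq_zero hα hβ hc hne hzero t₀
  have hE := h.energy_pos_of_lt hα hβ hc hne hzero ht
  rw [hwt, emdenEnergy_zero_left hα] at hE
  refine exists_pos_and_exists_neg_of_hasDerivAt_ne_zero (h.hasDerivAt_fst t) hwt fun hp => ?_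
  norm_num [hp] at hE

theorem sign_changing_and_tendsto_iff_exists_energy_eq_zero (h : IsEmdenOrbit α β c w p)
    (hα : 0 < α) (hβ : 0 < β) (hc : 0 < c) (hne : ∃ t, w t ≠ 0) :
    (((∃ t, 0 < w t) ∧ ∃ t, w t < 0) ∧
      ∃ ε : ℝ, (ε = 1 ∨ ε = -1) ∧ Tendsto w atBot (𝓝 (ε * β ^ (1 / α)))) ↔
    ∃ t, emdenEnergy α β (w t) (p t) = 0 := by
  constructor
  · rintro ⟨⟨⟨a, ha⟩, b, hb⟩, ε, hε, hlim⟩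
    have hL : |ε * β ^ (1 / α)| ^ α = β := by
      have hε₁ : |ε| = 1 := by rcases hε with rfl | rfl <;> simp
      rw [abs_mul, hε₁, one_mul, abs_of_nonneg (by positivity), one_div,
        Real.rpow_inv_rpow hβ.le hα.ne']
    exact h.exists_energy_eq_zero hα hβ hc hL hlim
      (mem_range_of_exists_le_of_exists_ge h.continuous_fst ⟨b, hb.le⟩ ⟨a, ha.le⟩)
  · rintro ⟨t₀, hzero⟩
    exact ⟨h.exists_pos_and_exists_neg hα hβ hc hne hzero,
      h.exists_tendsto_atBot hα hβ hc
        (h.energy_neg_of_lt hα hβ hc hne hzero (sub_one_lt t₀))⟩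

end IsEmdenOrbit

end Orbit

section EmdenFowler

open Set Topology Real

theorem exists_pos_and_iff_exists_exp {P : ℝ → Prop} : (∃ r, 0 < r ∧ P r) ↔ ∃ t, P (exp t) :=
  ⟨fun ⟨r, hr, hP⟩ => ⟨log r, by rwa [exp_log hr]⟩, fun ⟨t, hP⟩ => ⟨exp t, exp_pos t, hP⟩⟩

/-- The Emden–Fowler transform `t ↦ r ^ γ f(r)`, `r = e ^ t`, of a function `f` on `(0, ∞)`. -/
noncomputable def emdenFowler (γ : ℝ) (f : ℝ → ℝ) (t : ℝ) : ℝ :=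
  exp (γ * t) * f (exp t)

variable {γ d α β : ℝ} {f f' u : ℝ → ℝ} {t : ℝ}

theorem hasDerivAt_emdenFowler (hf : HasDerivAt f (f' (exp t)) (exp t)) :
    HasDerivAt (emdenFowler γ f) (emdenFowler γ (fun r => γ * f r + r * f' r) t) t := by
  have hweight : HasDerivAt (fun t => exp (γ * t)) (exp (γ * t) * γ) t := by
    simpa using ((hasDerivAt_id t).const_mul γ).exp
  refine (hweight.mul (hf.comp t (hasDerivAt_exp t))).congr_deriv ?_
  simp only [emdenFowler, Function.comp_apply]
  ring

theorem emdenFowler_pos_iff : 0 < emdenFowler γ f t ↔ 0 < f (exp t) :=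
  mul_pos_iff_of_pos_left (exp_pos _)

theorem emdenFowler_neg_iff : emdenFowler γ f t < 0 ↔ f (exp t) < 0 :=
  smul_neg_iff_of_pos_left (exp_pos _)

theorem emdenFowler_eq_zero_iff : emdenFowler γ f t = 0 ↔ f (exp t) = 0 :=
  mul_eq_zero_iff_left (exp_ne_zero _)

theorem tendsto_emdenFowler_atBot_iff {l : Filter ℝ} :
    Tendsto (emdenFowler γ f) atBot l ↔ Tendsto (fun r => r ^ γ * f r) (𝓝[>] 0) l := by
  rw [← tendsto_comp_exp_atBot]
  refine tendsto_congr fun t => ?_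
  rw [emdenFowler, mul_comm γ, exp_mul]

theorem abs_emdenFowler_rpow (hα : α ≠ 0) :
    |emdenFowler (2 / α) f t| ^ α = exp t ^ 2 * |f (exp t)| ^ α := by
  have hexp : exp (2 / α * t) ^ α = exp t ^ 2 := by
    rw [← exp_mul, ← exp_nat_mul, Nat.cast_two, mul_right_comm, div_mul_cancel₀ _ hα]
  rw [emdenFowler, abs_mul, abs_exp, mul_rpow (exp_pos _).le (abs_nonneg _), hexp]

/-- `u` is a `C²` radial solution of `Δu + |u| ^ α u = 0` on the punctured space of dimension `d`,
seen as a function of the radius; `d` may be any real number. -/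
structure IsRadialSolution (d α : ℝ) (u : ℝ → ℝ) : Prop where
  contDiffOn : ContDiffOn ℝ 2 u (Ioi 0)
  ode : ∀ r : ℝ, 0 < r → deriv (deriv u) r + ((d - 1) / r) * deriv u r + |u r| ^ α * u r = 0

/-- The functional of statement (2): the energy `emdenEnergy` of the Emden–Fowler transform of `u`,
without its positive factor `r ^ (4 / α)`. -/
noncomputable def radialEnergy (d α : ℝ) (u : ℝ → ℝ) (r : ℝ) : ℝ :=
  r ^ 2 / 2 * (deriv u r) ^ 2 + 2 / α * r * u r * deriv u r +
    r ^ 2 / (α + 2) * |u r| ^ (α + 2) + (4 - (d - 2) * α) / α ^ 2 * |u r| ^ 2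

/-- Statement (1): `u` changes sign on `(0, ∞)` and behaves like `± β ^ (1 / α) r ^ (-2 / α)` at
the origin. -/
def IsSingularSignChanging (α β : ℝ) (u : ℝ → ℝ) : Prop :=
  ((∃ r : ℝ, 0 < r ∧ 0 < u r) ∧ (∃ r : ℝ, 0 < r ∧ u r < 0)) ∧
    ∃ ε : ℝ, (ε = 1 ∨ ε = -1) ∧
      Tendsto (fun r : ℝ => r ^ (2 / α) * u r) (𝓝[>] 0) (𝓝 (ε * β ^ (1 / α)))

theorem isSingularSignChanging_iff_emdenFowler : IsSingularSignChanging α β u ↔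
    ((∃ t, 0 < emdenFowler (2 / α) u t) ∧ ∃ t, emdenFowler (2 / α) u t < 0) ∧
      ∃ ε : ℝ, (ε = 1 ∨ ε = -1) ∧
        Tendsto (emdenFowler (2 / α) u) atBot (𝓝 (ε * β ^ (1 / α))) := by
  simp only [IsSingularSignChanging, exists_pos_and_iff_exists_exp, emdenFowler_pos_iff,
    emdenFowler_neg_iff, tendsto_emdenFowler_atBot_iff]

theorem emdenEnergy_emdenFowler (hα : 0 < α) :
    emdenEnergy α (2 / α * (d - 2 - 2 / α)) (emdenFowler (2 / α) u t)
        (emdenFowler (2 / α) (fun r => 2 / α * u r + r * deriv u r) t) =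
      exp (2 / α * t) ^ 2 * radialEnergy d α u (exp t) := by
  rw [emdenEnergy_eq hα, abs_emdenFowler_rpow hα.ne', radialEnergy, abs_rpow_add_two hα, sq_abs]
  simp only [emdenFowler]
  field_simp
  ring

theorem exists_radialEnergy_eq_zero_iff (hα : 0 < α) :
    (∃ r, 0 < r ∧ radialEnergy d α u r = 0) ↔
      ∃ t, emdenEnergy α (2 / α * (d - 2 - 2 / α)) (emdenFowler (2 / α) u t)
        (emdenFowler (2 / α) (fun r => 2 / α * u r + r * deriv u r) t) = 0 := by
  simp [exists_pos_and_iff_exists_exp, emdenEnergy_emdenFowler hα]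

namespace IsRadialSolution

theorem hasDerivAt (hu : IsRadialSolution d α u) {r : ℝ} (hr : 0 < r) :
    HasDerivAt u (deriv u r) r :=
  ((hu.contDiffOn.differentiableOn two_ne_zero).differentiableAt (Ioi_mem_nhds hr)).hasDerivAt

theorem hasDerivAt_deriv (hu : IsRadialSolution d α u) {r : ℝ} (hr : 0 < r) :
    HasDerivAt (deriv u) (deriv (deriv u) r) r :=
  (((hu.contDiffOn.deriv_of_isOpen isOpen_Ioi (m := 1) (by norm_num)).differentiableOn
    one_ne_zero).differentiableAt (Ioi_mem_nhds hr)).hasDerivAt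

theorem isEmdenOrbit_emdenFowler (hu : IsRadialSolution d α u) (hα : α ≠ 0) :
    IsEmdenOrbit α (2 / α * (d - 2 - 2 / α)) (4 / α - (d - 2)) (emdenFowler (2 / α) u)
      (emdenFowler (2 / α) fun r => 2 / α * u r + r * deriv u r) where
  hasDerivAt_fst t := hasDerivAt_emdenFowler (hu.hasDerivAt (exp_pos t))
  hasDerivAt_snd t := by
    have hr := exp_pos t
    have hinner : HasDerivAt (fun r => 2 / α * u r + r * deriv u r)
        (2 / α * deriv u (exp t) + (deriv u (exp t) + exp t * deriv (deriv u) (exp t)))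
        (exp t) := by
      simpa using ((hu.hasDerivAt hr).const_mul (2 / α)).fun_add
        ((hasDerivAt_id (exp t)).fun_mul (hu.hasDerivAt_deriv hr))
    refine (hasDerivAt_emdenFowler
      (f' := fun r => 2 / α * deriv u r + (deriv u r + r * deriv (deriv u) r))
      hinner).congr_deriv ?_
    have hode : deriv (deriv u) (exp t) =
        -((d - 1) / exp t * deriv u (exp t)) - |u (exp t)| ^ α * u (exp t) := by
      linarith [hu.ode (exp t) hr]
    rw [abs_emdenFowler_rpow hα]
    simp only [emdenFowler, hode]
    field_simp
    ring

end IsRadialSolution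

theorem emdenFowler_parameters_pos (hα1 : 2 / (d - 2) < α) (hα2 : α < 4 / (d - 2)) :
    0 < α ∧ 0 < 2 / α * (d - 2 - 2 / α) ∧ 0 < 4 / α - (d - 2) := by
  have hd : 0 < d - 2 := by
    by_contra! hd
    linarith [div_le_div_of_nonpos_of_le hd (by norm_num : (2 : ℝ) ≤ 4)]
  have hα : 0 < α := (by positivity : 0 < 2 / (d - 2)).trans hα1
  rw [div_lt_comm₀ hd hα] at hα1
  rw [lt_div_comm₀ hα hd] at hα2
  exact ⟨hα, mul_pos (by positivity) (sub_pos.2 hα1), sub_pos.2 hα2⟩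

theorem stmt_14_general (hα1 : 2 / (d - 2) < α) (hα2 : α < 4 / (d - 2))
    (hβ : β = 2 / α * (d - 2 - 2 / α)) (hu : IsRadialSolution d α u)
    (hune : ∃ r : ℝ, 0 < r ∧ u r ≠ 0) :
    (IsSingularSignChanging α β u ↔ ∃ r₀ : ℝ, 0 < r₀ ∧ radialEnergy d α u r₀ = 0) ∧
      (IsSingularSignChanging α β u → ∀ R : ℝ, 0 < R → ∃ r : ℝ, R < r ∧ u r = 0) := by
  subst hβ
  obtain ⟨hα, hβ, hc⟩ := emdenFowler_parameters_pos hα1 hα2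
  have hw := hu.isEmdenOrbit_emdenFowler hα.ne'
  have hne : ∃ t, emdenFowler (2 / α) u t ≠ 0 :=
    (exists_pos_and_iff_exists_exp.1 hune).imp fun _ => mt emdenFowler_eq_zero_iff.1
  have hiff := hw.sign_changing_and_tendsto_iff_exists_energy_eq_zero hα hβ hc hne
  rw [isSingularSignChanging_iff_emdenFowler, exists_radialEnergy_eq_zero_iff hα]
  refine ⟨hiff, fun hsing R hR => ?_⟩
  obtain ⟨t₀, hzero⟩ := hiff.1 hsing
  obtain ⟨t, ht, hwt⟩ := hw.exists_gt_fst_eq_zero hα hβ hc hne hzero (log R)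
  exact ⟨exp t, (log_lt_iff_lt_exp hR).1 ht, emdenFowler_eq_zero_iff.1 hwt⟩

end EmdenFowler

theorem stmt_14 (N : ℕ) (hN : 3 ≤ N) (α β : ℝ)
    (hα1 : 2 / ((N : ℝ) - 2) < α) (hα2 : α < 4 / ((N : ℝ) - 2))
    (hβ : β = 2 / α * ((N : ℝ) - 2 - 2 / α))
    (u : ℝ → ℝ) (huC2 : ContDiffOn ℝ 2 u (Set.Ioi 0))
    (hune : ∃ r : ℝ, 0 < r ∧ u r ≠ 0)
    (huode : ∀ r : ℝ, 0 < r →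
      deriv (deriv u) r + (((N : ℝ) - 1) / r) * deriv u r + |u r| ^ α * u r = 0) :
    -- (1) ↔ (2)
    ((((∃ r : ℝ, 0 < r ∧ 0 < u r) ∧ (∃ r : ℝ, 0 < r ∧ u r < 0)) ∧
      (∃ ε : ℝ, (ε = 1 ∨ ε = -1) ∧
        Tendsto (fun r : ℝ => r ^ (2 / α) * u r)
          (nhdsWithin 0 (Set.Ioi 0)) (nhds (ε * β ^ (1 / α))))) ↔
      (∃ r₀ : ℝ, 0 < r₀ ∧
        r₀ ^ 2 / 2 * (deriv u r₀) ^ 2 + 2 / α * r₀ * u r₀ * deriv u r₀ +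
          r₀ ^ 2 / (α + 2) * |u r₀| ^ (α + 2) +
          (4 - ((N : ℝ) - 2) * α) / α ^ 2 * |u r₀| ^ 2 = 0)) ∧
    -- moreover, in this case u oscillates indefinitely as r → ∞
    ((((∃ r : ℝ, 0 < r ∧ 0 < u r) ∧ (∃ r : ℝ, 0 < r ∧ u r < 0)) ∧
      (∃ ε : ℝ, (ε = 1 ∨ ε = -1) ∧
        Tendsto (fun r : ℝ => r ^ (2 / α) * u r)
          (nhdsWithin 0 (Set.Ioi 0)) (nhds (ε * β ^ (1 / α))))) →
      ∀ R : ℝ, 0 < R → ∃ r : ℝ, R < r ∧ u r = 0) :=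
  stmt_14_general hα1 hα2 hβ ⟨huC2, huode⟩ hune
end
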